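/- Let b ∈ 𝒮((ℤⁿ)^p) with p ∈ ℕ, let P_j ∈ ℝ[X₁,…,Xₙ] be a homogeneous polynomial of degree j, let r ∈ ℕ₀, and let φ be a real-valued function on ℤⁿ × (ℤⁿ)^p. Define h(s,k,l) := b(l) P_j(k) e^{iφ(k,l)} / (|k|^{s+r} |k+l̂₁|² ⋯ |k+l̂_p|²), with h(s,k,l) := 0 if k = 0 or a denominator vanishes, and H(s,l) := Σ'_{k∈ℤⁿ} h(s,k,l). If r + 2p − j > n, then H satisfies hypothesis (H1): there exists ρ > 0 such that for every l, the map s ↦ H(s,l) extends holomorphically to the open disk U_ρ of center 0 and radius ρ, and the series Σ_{l∈(ℤⁿ)^p} sup_{s∈U_ρ} |H(s,l)| is finite. -/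

import Mathlib

noncomputable section

/-- Euclidean norm of an integer vector `k ∈ ℤⁿ`. -/
def znorm {n : ℕ} (k : Fin n → ℤ) : ℝ := Real.sqrt (∑ i, ((k i : ℝ)) ^ 2)

/-- Schwartz (rapidly decreasing) sequences on `(ℤⁿ)^p`. -/
def IsSchwartzSeq {p n : ℕ} (b : (Fin p → Fin n → ℤ) → ℂ) : Prop :=
  ∀ r : ℕ, ∃ C : ℝ, ∀ l : Fin p → Fin n → ℤ,
    (1 + ∑ i, ∑ a, ((l i a : ℝ)) ^ 2) ^ r * ‖b l‖ ^ 2 ≤ C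

/-- Partial sums `l̂ᵢ = l₁ + ⋯ + lᵢ` of a tuple `l ∈ (ℤⁿ)^p`. -/
def lhat {p n : ℕ} (l : Fin p → Fin n → ℤ) (i : Fin p) : Fin n → ℤ :=
  ∑ j ∈ Finset.Iic i, l j

/-- The term `h(s,k,l) = b(l) P_j(k) e^{iφ(k,l)} / (|k|^{s+r} |k+l̂₁|²⋯|k+l̂_p|²)`,
set to `0` when `k = 0` or one of the denominators vanishes. -/
def hTerm {n p : ℕ} (b : (Fin p → Fin n → ℤ) → ℂ) (Pj : MvPolynomial (Fin n) ℝ) (r : ℕ)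
    (φ : (Fin n → ℤ) → (Fin p → Fin n → ℤ) → ℝ) (s : ℂ) (k : Fin n → ℤ)
    (l : Fin p → Fin n → ℤ) : ℂ :=
  if k = 0 ∨ ∃ i : Fin p, k + lhat l i = 0 then 0
  else b l * ((MvPolynomial.eval (fun i => ((k i : ℤ) : ℝ)) Pj : ℝ) : ℂ) *
      Complex.exp (Complex.I * ((φ k l : ℝ) : ℂ)) /
    ((znorm k : ℂ) ^ (s + (r : ℂ)) * ∏ i : Fin p, ((znorm (k + lhat l i) : ℝ) : ℂ) ^ 2)

/-- `H(s,l) = Σ'_{k∈ℤⁿ} h(s,k,l)`. -/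
def Hfun {n p : ℕ} (b : (Fin p → Fin n → ℤ) → ℂ) (Pj : MvPolynomial (Fin n) ℝ) (r : ℕ)
    (φ : (Fin n → ℤ) → (Fin p → Fin n → ℤ) → ℝ) (s : ℂ) (l : Fin p → Fin n → ℤ) : ℂ :=
  ∑' k : Fin n → ℤ, hTerm b Pj r φ s k l

lemma summable_lattice (ι : Type*) [Fintype ι] (e : ℝ) (he : (Fintype.card ι : ℝ) < e) :
    Summable fun k : ι → ℤ => (Real.sqrt (∑ i, ((k i : ℝ)) ^ 2)) ^ (-e) := by
  classical
  let B := (EuclideanSpace.basisFun ι ℝ).toBasis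
  let L := Submodule.span ℤ (Set.range B)
  have hr : Module.finrank ℤ L = Fintype.card ι := by
    rw [ZLattice.rank ℝ L]; simp
  have h := ZLattice.summable_norm_rpow L (-e) (by rw [hr]; linarith)
  let f : (ι → ℤ) → L := fun k => ⟨∑ i, k i • B i,
    Submodule.sum_mem _ fun i _ => Submodule.smul_mem _ _ (Submodule.subset_span ⟨i, rfl⟩)⟩
  have hf : ∀ k i, (f k : EuclideanSpace ℝ ι) i = (k i : ℝ) := by
    intro k i
    simp [f, B, Finset.sum_apply, Pi.single_apply]
  have hinj : Function.Injective f := by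
    intro k k' hk
    funext i
    have := congrArg (fun z : L => (z : EuclideanSpace ℝ ι) i) hk
    simp only [hf] at this
    exact_mod_cast this
  refine (h.comp_injective hinj).congr fun k => ?_
  simp only [Function.comp, Submodule.coe_norm, EuclideanSpace.norm_eq, hf, Real.norm_eq_abs, sq_abs]

lemma znorm_eq {n : ℕ} (k : Fin n → ℤ) :
    znorm k = ‖(WithLp.toLp 2 (fun i => (k i : ℝ)) : EuclideanSpace ℝ (Fin n))‖ := by
  simp [znorm, EuclideanSpace.norm_eq]

lemma znorm_nonneg {n : ℕ} (k : Fin n → ℤ) : 0 ≤ znorm k := Real.sqrt_nonneg _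

lemma znorm_le_add {n : ℕ} (k m : Fin n → ℤ) : znorm k ≤ znorm (k + m) + znorm m := by
  simp only [znorm_eq]
  refine le_trans (le_of_eq ?_) (norm_sub_le _ _)
  congr 1
  ext i
  simp

lemma one_le_sumsq {ι : Type*} [Fintype ι] (k : ι → ℤ) (h : k ≠ 0) :
    (1 : ℝ) ≤ ∑ i, ((k i : ℝ)) ^ 2 := by
  obtain ⟨i, hi⟩ := Function.ne_iff.mp h
  have h1 : (1 : ℝ) ≤ (k i : ℝ) ^ 2 := by
    have h2 : (1 : ℤ) ≤ (k i) ^ 2 := Int.one_le_abs (pow_ne_zero 2 hi) |>.trans (by simp)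
    exact_mod_cast h2
  exact h1.trans (Finset.single_le_sum (f := fun i => ((k i : ℝ)) ^ 2)
    (fun _ _ => sq_nonneg _) (Finset.mem_univ i))

lemma one_le_znorm {n : ℕ} (k : Fin n → ℤ) (h : k ≠ 0) : 1 ≤ znorm k :=
  Real.one_le_sqrt.mpr (one_le_sumsq k h)

lemma abs_coord_le {n : ℕ} (k : Fin n → ℤ) (i : Fin n) : |(k i : ℝ)| ≤ znorm k := by
  rw [znorm, ← Real.sqrt_sq_eq_abs]
  exact Real.sqrt_le_sqrt (Finset.single_le_sum (f := fun i => ((k i : ℝ)) ^ 2)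
    (fun _ _ => sq_nonneg _) (Finset.mem_univ i))

lemma abs_le_sq_int (z : ℤ) : |(z : ℝ)| ≤ (z : ℝ) ^ 2 := by
  have : |z| ≤ z ^ 2 := by
    rw [← sq_abs]
    nlinarith [abs_nonneg z, sq_nonneg (|z| - 1), Int.le_self_sq |z|]
  exact_mod_cast this

lemma znorm_le_sum {n : ℕ} (k : Fin n → ℤ) : znorm k ≤ ∑ i, |(k i : ℝ)| := by
  rw [znorm]
  refine Real.sqrt_le_iff.mpr ⟨Finset.sum_nonneg fun _ _ => abs_nonneg _, ?_⟩
  have := Finset.sum_sq_le_sq_sum_of_nonneg (s := Finset.univ) (f := fun i => |(k i : ℝ)|)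
    (fun _ _ => abs_nonneg _)
  simpa using this

lemma znorm_lhat_le {n p : ℕ} (l : Fin p → Fin n → ℤ) (i : Fin p) :
    znorm (lhat l i) ≤ ∑ i, ∑ a, ((l i a : ℝ)) ^ 2 := by
  refine (znorm_le_sum _).trans ?_
  rw [Finset.sum_comm]
  refine Finset.sum_le_sum fun a _ => ?_
  simp only [lhat, Finset.sum_apply, Int.cast_sum]
  refine (Finset.abs_sum_le_sum_abs _ _).trans ?_
  refine (Finset.sum_le_sum fun j _ => abs_le_sq_int (l j a)).trans ?_
  exact Finset.sum_le_sum_of_subset_of_nonneg (Finset.subset_univ _) fun _ _ _ => sq_nonneg _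

lemma poly_bound {n j : ℕ} (P : MvPolynomial (Fin n) ℝ) (hP : P.IsHomogeneous j) :
    ∃ C : ℝ, 0 ≤ C ∧ ∀ k : Fin n → ℤ,
      |MvPolynomial.eval (fun i => ((k i : ℤ) : ℝ)) P| ≤ C * znorm k ^ j := by
  refine ⟨∑ d ∈ P.support, |P.coeff d|, Finset.sum_nonneg fun _ _ => abs_nonneg _, fun k => ?_⟩
  rw [MvPolynomial.eval_eq', Finset.sum_mul]
  refine (Finset.abs_sum_le_sum_abs _ _).trans (Finset.sum_le_sum fun d hd => ?_)
  rw [abs_mul]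
  refine mul_le_mul_of_nonneg_left ?_ (abs_nonneg _)
  have hdeg : ∑ i, d i = j := by
    have := hP (MvPolynomial.mem_support_iff.mp hd)
    rw [← this, Finsupp.weight_apply, Finsupp.sum_fintype _ _ (by simp)]
    simp
  rw [Finset.abs_prod, ← hdeg, ← Finset.prod_pow_eq_pow_sum]
  refine Finset.prod_le_prod (fun _ _ => abs_nonneg _) fun i _ => ?_
  rw [abs_pow]
  exact pow_le_pow_left₀ (abs_nonneg _) (abs_coord_le k i) _

set_option maxHeartbeats 1000000 in
lemma hTerm_bound {n p j r : ℕ} (b : (Fin p → Fin n → ℤ) → ℂ) (Pj : MvPolynomial (Fin n) ℝ)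
    (φ : (Fin n → ℤ) → (Fin p → Fin n → ℤ) → ℝ) (hcond : n + j < r + 2 * p)
    (C : ℝ) (hC : 0 ≤ C)
    (hP : ∀ k : Fin n → ℤ,
      |MvPolynomial.eval (fun i => ((k i : ℤ) : ℝ)) Pj| ≤ C * znorm k ^ j)
    (s : ℂ) (hs : s ∈ Metric.ball (0 : ℂ) (1 / 2)) (k : Fin n → ℤ) (l : Fin p → Fin n → ℤ) :
    ‖hTerm b Pj r φ s k l‖ ≤
      ‖b l‖ * C * (1 + ∑ i, ∑ a, ((l i a : ℝ)) ^ 2) ^ (2 * p) * znorm k ^ (-((n : ℝ) + 1 / 2)) := by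
  set Q : ℝ := 1 + ∑ i, ∑ a, ((l i a : ℝ)) ^ 2 with hQ
  have hQ1 : 1 ≤ Q := by
    have : 0 ≤ ∑ i, ∑ a, ((l i a : ℝ)) ^ 2 :=
      Finset.sum_nonneg fun _ _ => Finset.sum_nonneg fun _ _ => sq_nonneg _
    linarith
  have hx0 := znorm_nonneg k
  unfold hTerm
  split_ifs with h
  · rw [norm_zero]
    have := Real.rpow_nonneg hx0 (-((n : ℝ) + 1 / 2))
    positivity
  push Not at h
  obtain ⟨hk, hl⟩ := h
  have hx1 := one_le_znorm k hk
  set x := znorm k with hx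
  have hxpos : 0 < x := by linarith
  have hre : -(1 / 2) ≤ s.re := by
    have h1 := Complex.abs_re_le_norm s
    have h2 : ‖s‖ < 1 / 2 := by simpa using hs
    linarith [neg_abs_le s.re]
  have hexp : ‖Complex.exp (Complex.I * ((φ k l : ℝ) : ℂ))‖ = 1 := by
    rw [mul_comm]; exact Complex.norm_exp_ofReal_mul_I _
  have hpow : ‖(x : ℂ) ^ (s + (r : ℂ))‖ = x ^ (s.re + r) := by
    rw [Complex.norm_cpow_eq_rpow_re_of_pos hxpos]; simp
  have hprod : ‖∏ i : Fin p, ((znorm (k + lhat l i) : ℝ) : ℂ) ^ 2‖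
      = ∏ i : Fin p, (znorm (k + lhat l i)) ^ 2 := by
    rw [norm_prod]
    refine Finset.prod_congr rfl fun i _ => ?_
    rw [norm_pow, Complex.norm_real, Real.norm_eq_abs, sq_abs]
  rw [norm_div, norm_mul, norm_mul, norm_mul, hexp, hpow, hprod, Complex.norm_real,
    Real.norm_eq_abs, mul_one]
  set Y := ∏ i : Fin p, (znorm (k + lhat l i)) ^ 2 with hY
  have hYpos : 0 < Y := Finset.prod_pos fun i _ => by
    have := one_le_znorm _ (hl i)
    positivity
  have hXY : x ^ (2 * p) ≤ Q ^ (2 * p) * Y := by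
    have h1 : x ^ (2 * p) = ∏ i : Fin p, x ^ 2 := by simp [pow_mul]
    have h2 : Q ^ (2 * p) = ∏ i : Fin p, Q ^ 2 := by simp [pow_mul]
    rw [h1, h2, hY, ← Finset.prod_mul_distrib]
    refine Finset.prod_le_prod (fun _ _ => by positivity) fun i _ => ?_
    rw [← mul_pow]
    refine pow_le_pow_left₀ hx0 ?_ 2
    have h3 := one_le_znorm _ (hl i)
    have h4 := znorm_le_add k (lhat l i)
    have h5 := znorm_lhat_le l i
    have h6 := znorm_nonneg (lhat l i)
    have h8 : 1 + znorm (lhat l i) ≤ Q := by rw [hQ]; linarith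
    clear_value Q x
    nlinarith
  have hxr : 0 < x ^ (s.re + r) := Real.rpow_pos_of_pos hxpos _
  rw [div_le_iff₀ (mul_pos hxr hYpos)]
  have key : x ^ j ≤ x ^ (-((n : ℝ) + 1 / 2)) * x ^ (s.re + r) * x ^ (2 * p) := by
    rw [← Real.rpow_natCast x j, ← Real.rpow_natCast x (2 * p), ← Real.rpow_add hxpos,
      ← Real.rpow_add hxpos]
    refine Real.rpow_le_rpow_of_exponent_le hx1 ?_
    have : (n : ℝ) + j + 1 ≤ r + 2 * p := by 
      have h0 : n + j + 1 ≤ r + 2 * p := hcond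
      have h1 : ((n + j + 1 : ℕ) : ℝ) ≤ ((r + 2 * p : ℕ) : ℝ) := Nat.cast_le.mpr h0
      push_cast at h1
      exact h1
    push_cast
    linarith
  have hneg := Real.rpow_nonneg hx0 (-((n : ℝ) + 1 / 2))
  calc ‖b l‖ * |MvPolynomial.eval (fun i => ((k i : ℤ) : ℝ)) Pj|
      ≤ ‖b l‖ * (C * x ^ j) := mul_le_mul_of_nonneg_left (hP k) (norm_nonneg _)
    _ ≤ ‖b l‖ * (C * (x ^ (-((n : ℝ) + 1 / 2)) * x ^ (s.re + r) * x ^ (2 * p))) := by gcongr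
    _ ≤ ‖b l‖ * (C * (x ^ (-((n : ℝ) + 1 / 2)) * x ^ (s.re + r) * (Q ^ (2 * p) * Y))) := by
        gcongr
    _ = _ := by ring

lemma summable_l {n p : ℕ} (b : (Fin p → Fin n → ℤ) → ℂ) (hb : IsSchwartzSeq b) (N : ℕ) :
    Summable fun l : Fin p → Fin n → ℤ =>
      ‖b l‖ * (1 + ∑ i, ∑ a, ((l i a : ℝ)) ^ 2) ^ N := by
  classical
  set M := p * n + 1 with hM
  obtain ⟨C, hC⟩ := hb (2 * (N + M))
  have hs := summable_lattice (Fin p × Fin n) (M : ℝ) (by simp [hM])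
  have hs2 := (Equiv.curry (Fin p) (Fin n) ℤ).symm.summable_iff.mpr hs
  have hs3 : Summable fun l : Fin p → Fin n → ℤ => if l = 0 then (1 : ℝ) else 0 :=
    summable_of_finite_support ((Set.finite_singleton 0).subset fun l hl => by
      by_contra h
      simp only [Set.mem_singleton_iff] at h
      simp [h] at hl)
  refine Summable.of_nonneg_of_le (fun l => ?_) (fun l => ?_) ((hs2.add hs3).mul_left (Real.sqrt C))
  · positivity
  have hN : ∑ x : Fin p × Fin n, (((Equiv.curry (Fin p) (Fin n) ℤ).symm l x : ℤ) : ℝ) ^ 2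
      = ∑ i, ∑ a, ((l i a : ℝ)) ^ 2 := by
    rw [Fintype.sum_prod_type]; rfl
  simp only [Function.comp]
  rw [hN]
  have hne : l ≠ 0 → 1 ≤ ∑ i, ∑ a, ((l i a : ℝ)) ^ 2 := by
    intro h
    rw [← hN]
    refine one_le_sumsq _ fun h0 => h ?_
    funext i a
    exact congrFun h0 (i, a)
  have hS0 : 0 ≤ ∑ i, ∑ a, ((l i a : ℝ)) ^ 2 :=
    Finset.sum_nonneg fun _ _ => Finset.sum_nonneg fun _ _ => sq_nonneg _
  have hCl := hC l
  set S := ∑ i, ∑ a, ((l i a : ℝ)) ^ 2 with hS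
  have h1 : (1 + S) ^ (N + M) * ‖b l‖ ≤ Real.sqrt C := by
    refine Real.le_sqrt_of_sq_le (le_trans (le_of_eq ?_) hCl)
    ring
  have hQpos : 0 < (1 + S) ^ M := by positivity
  have h2 : ‖b l‖ * (1 + S) ^ N ≤ Real.sqrt C * ((1 + S) ^ M)⁻¹ := by
    rw [← div_eq_mul_inv, le_div_iff₀ hQpos]
    refine le_trans (le_of_eq ?_) h1
    ring
  refine h2.trans (mul_le_mul_of_nonneg_left ?_ (Real.sqrt_nonneg _))
  have h3 : 0 ≤ Real.sqrt S ^ (-(M : ℝ)) := Real.rpow_nonneg (Real.sqrt_nonneg _) _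
  by_cases h : l = 0
  · rw [if_pos h]
    have : ((1 + S) ^ M)⁻¹ ≤ 1 := inv_le_one_of_one_le₀ (one_le_pow₀ (by linarith))
    linarith
  · rw [if_neg h, add_zero, Real.rpow_neg (Real.sqrt_nonneg _), Real.rpow_natCast]
    have hS1 := hne h
    have : 1 ≤ Real.sqrt S := Real.one_le_sqrt.mpr hS1
    have hle : Real.sqrt S ≤ 1 + S := by
      nlinarith [Real.sq_sqrt hS0]
    gcongr

/-- **Corollary.** With the notation above, if `r + 2p − j > n` then
`H(s,l) = Σ'_k h(s,k,l)` satisfies hypothesis (H1): for some `ρ > 0`, each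
`s ↦ H(s,l)` is holomorphic on the disk `U_ρ` and `Σ_l sup_{U_ρ} |H(·,l)| < ∞`. -/
theorem Hfun_satisfies_H1 (n p : ℕ) (hn : 0 < n) (hp : 0 < p) (j r : ℕ)
    (b : (Fin p → Fin n → ℤ) → ℂ) (hb : IsSchwartzSeq b)
    (Pj : MvPolynomial (Fin n) ℝ) (hPj : Pj.IsHomogeneous j)
    (φ : (Fin n → ℤ) → (Fin p → Fin n → ℤ) → ℝ)
    (hcond : n + j < r + 2 * p) :
    ∃ ρ : ℝ, 0 < ρ ∧
      (∀ l : Fin p → Fin n → ℤ,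
        DifferentiableOn ℂ (fun s => Hfun b Pj r φ s l) (Metric.ball (0 : ℂ) ρ)) ∧
      Summable (fun l : Fin p → Fin n → ℤ =>
        ⨆ s ∈ Metric.ball (0 : ℂ) ρ, ‖Hfun b Pj r φ s l‖) := by
  obtain ⟨C, hC0, hC⟩ := poly_bound Pj hPj
  have hk : Summable fun k : Fin n → ℤ => znorm k ^ (-((n : ℝ) + 1 / 2)) :=
    summable_lattice (Fin n) ((n : ℝ) + 1 / 2) (by simp)
  have hbd := fun s hs k l => hTerm_bound b Pj φ hcond C hC0 hC s hs k l
  refine ⟨1 / 2, by norm_num, fun l => ?_, ?_⟩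
  · refine Complex.differentiableOn_tsum_of_summable_norm (hk.mul_left _) (fun k => ?_)
      Metric.isOpen_ball (fun k s hs => hbd s hs k l)
    unfold hTerm
    split_ifs with h
    · exact differentiableOn_const _
    push Not at h
    have hx : (znorm k : ℂ) ≠ 0 := by
      have := one_le_znorm k h.1
      exact_mod_cast (by linarith : znorm k ≠ 0)
    intro s _
    refine DifferentiableAt.differentiableWithinAt ?_
    refine DifferentiableAt.div (differentiableAt_const _) ?_ ?_
    · refine DifferentiableAt.mul ?_ (differentiableAt_const _)
      exact DifferentiableAt.const_cpow (by fun_prop) (Or.inl hx)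
    · refine mul_ne_zero (by simp [Complex.cpow_eq_zero_iff, hx]) ?_
      refine Finset.prod_ne_zero_iff.mpr fun i _ => pow_ne_zero 2 ?_
      have := one_le_znorm _ (h.2 i)
      exact_mod_cast (by linarith : znorm (k + lhat l i) ≠ 0)
  · have hsum := ((summable_l b hb (2 * p)).mul_right
      (C * ∑' k : Fin n → ℤ, znorm k ^ (-((n : ℝ) + 1 / 2))))
    have hT : 0 ≤ ∑' k : Fin n → ℤ, znorm k ^ (-((n : ℝ) + 1 / 2)) :=
      tsum_nonneg fun k => Real.rpow_nonneg (znorm_nonneg k) _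
    refine Summable.of_nonneg_of_le (fun l => ?_) (fun l => ?_) hsum
    · exact Real.iSup_nonneg fun s => Real.iSup_nonneg fun _ => norm_nonneg _
    · have hnn : 0 ≤ ‖b l‖ * (1 + ∑ i, ∑ a, ((l i a : ℝ)) ^ 2) ^ (2 * p) *
          (C * ∑' k : Fin n → ℤ, znorm k ^ (-((n : ℝ) + 1 / 2))) := by positivity
      refine Real.iSup_le (fun s => Real.iSup_le (fun hs => ?_) hnn) hnn
      refine (tsum_of_norm_bounded (hk.mul_left _).hasSum fun k => hbd s hs k l).trans ?_
      rw [tsum_mul_left]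
      exact le_of_eq (by ring)

end
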